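/- Let S be a finite alphabet, n ∈ ℕ and L ⊆ S^n. Then the counting winning set satisfies |W̃(L)| = |L|, and moreover W(W̃(L)) = W(L), where W(W̃(L)) is the winning set of the word game over the alphabet {1,…,|S|} with target set W̃(L). -/

import Mathlib

/-!
Word games (Salo–Törmä, "Playing with Subshifts").
The players' alphabet is `Bool`: player `A` is `false`, player `B` is `true`
(so that the order `A < B` is the order `false < true` on `Bool`).
-/

/-- Auxiliary function for the play of a finite ordered word game: the word built so far
is accumulated in the second argument, and at each step the player indicated by the
turn order picks the next letter as a function of the word built so far. -/
def playAux {S : Type*} (sA sB : List S → S) : List Bool → List S → List S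
  | [], w => w
  | b :: rest, w => playAux sA sB rest (w ++ [(if b then sB else sA) w])

/-- The play of the finite ordered word game with turn order `a`,
where `A` uses strategy `sA` and `B` uses strategy `sB`. -/
def play {S : Type*} (sA sB : List S → S) (a : List Bool) : List S :=
  playAux sA sB a []

/-- The winning set `W(X)` of a target set `X` of finite words: the set of turn orders
for which `A` has a winning strategy. -/
def Wset {S : Type*} (X : Set (List S)) : Set (List Bool) :=
  { a | ∃ sA : List S → S, ∀ sB : List S → S, play sA sB a ∈ X }

/-- Auxiliary function for the play of the counting game: at each step, `A` offers a
set of letters (a function of the word built so far) and `B` picks a letter from it. -/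
def cplayAux {S : Type*} (sA : List S → Finset S) (sB : List S → Finset S → S) :
    ℕ → List S → List S
  | 0, w => w
  | n + 1, w => cplayAux sA sB n (w ++ [sB w (sA w)])

/-- The play of the counting game of length `n`. -/
def cplay {S : Type*} (sA : List S → Finset S) (sB : List S → Finset S → S) (n : ℕ) :
    List S :=
  cplayAux sA sB n []

/-- The counting winning set `W̃(X) ⊆ {1,…,|S|}^n` of a target set `X ⊆ S^n`: the set
of parameter words `a` such that `A` can offer, at each coordinate `i`, a set of
exactly `a_i` letters (depending on the word built so far) so that whatever letters
`B` picks from the offered sets, the resulting word lies in `X`. -/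
def CWset {S : Type*} [Fintype S] (X : Set (List S)) :
    Set (List { i : ℕ // 1 ≤ i ∧ i ≤ Fintype.card S }) :=
  { a | ∃ sA : List S → Finset S, ∀ sB : List S → Finset S → S,
      (∀ (w : List S) (T : Finset S), T.Nonempty → sB w T ∈ T) →
      cplay sA sB a.length ∈ X ∧
        ∀ i : Fin a.length, (sA ((cplay sA sB a.length).take i.val)).card = (a.get i).val }

/-!
`A` wins the counting game with parameter `k · a` and target `X` iff at least `k` letters `c` are
such that she wins the game with parameter `a` and target `c⁻¹X = {w | c · w ∈ X}`. Hence, for each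
fixed `a`, there are exactly as many `k` with `k · a ∈ W̃(X)` as `c` with `a ∈ W̃(c⁻¹X)`, and
`|W̃(X)| = |X|` follows by induction on the length of the words.

The same recursion shows that `W̃(X)` is closed under decreasing the letters. In the word game on
such a target, `A` may as well always play the least letter `1`, and `B` the greatest letter `|S|`.
But offering `B` one letter amounts to choosing it for him, and offering him all of them amounts to
letting him move freely, so the parameter word resulting from a turn order `a` under these moves
lies in `W̃(X)` iff `a ∈ W(X)`.
-/

section WordGame

variable {S : Type*}

theorem playAux_cons (sA sB : List S → S) (a : List Bool) (c : S) (w : List S) :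
    playAux sA sB a (c :: w) =
      c :: playAux (sA ∘ List.cons c) (sB ∘ List.cons c) a w := by
  induction a generalizing w with
  | nil => rfl
  | cons b a ih => cases b <;> exact ih _

theorem play_false_cons (sA sB : List S → S) (a : List Bool) :
    play sA sB (false :: a) =
      sA [] :: play (sA ∘ List.cons (sA [])) (sB ∘ List.cons (sA [])) a :=
  playAux_cons sA sB a (sA []) []

theorem play_true_cons (sA sB : List S → S) (a : List Bool) :
    play sA sB (true :: a) =
      sB [] :: play (sA ∘ List.cons (sB [])) (sB ∘ List.cons (sB [])) a :=
  playAux_cons sA sB a (sB []) []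

theorem nil_mem_Wset [Nonempty S] {X : Set (List S)} : [] ∈ Wset X ↔ [] ∈ X := by
  simp only [Wset, play, playAux, Set.mem_ofPred_eq, exists_const, forall_const]

theorem false_cons_mem_Wset {X : Set (List S)} {a : List Bool} :
    false :: a ∈ Wset X ↔ ∃ c, a ∈ Wset (List.cons c ⁻¹' X) := by
  constructor
  · rintro ⟨sA, hsA⟩
    refine ⟨sA [], sA ∘ List.cons (sA []), fun sB => ?_⟩
    have hplay := hsA (sB ∘ List.tail)
    rwa [play_false_cons] at hplay
  · rintro ⟨c, sA, hsA⟩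
    refine ⟨fun | [] => c | _ :: w => sA w, fun sB => ?_⟩
    rw [play_false_cons]
    exact hsA (sB ∘ List.cons c)

theorem true_cons_mem_Wset [Nonempty S] {X : Set (List S)} {a : List Bool} :
    true :: a ∈ Wset X ↔ ∀ c, a ∈ Wset (List.cons c ⁻¹' X) := by
  constructor
  · rintro ⟨sA, hsA⟩ c
    refine ⟨sA ∘ List.cons c, fun sB => ?_⟩
    have hplay := hsA (fun | [] => c | _ :: w => sB w)
    rwa [play_true_cons] at hplay
  · intro h
    choose sA hsA using h
    refine ⟨fun | [] => Classical.arbitrary S | c :: w => sA c w, fun sB => ?_⟩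
    rw [play_true_cons]
    exact hsA (sB []) (sB ∘ List.cons (sB []))

end WordGame

section DownwardClosed

variable {α : Type*} [Preorder α]

/-- A set of words is downward closed if it is closed under decreasing letters. Words are compared
letterwise, whereas the order `≤` on `List α` is lexicographic. -/
def DownwardClosed (D : Set (List α)) : Prop :=
  ∀ ⦃a b : List α⦄, List.Forall₂ (· ≤ ·) a b → b ∈ D → a ∈ D

theorem DownwardClosed.preimage_cons {D : Set (List α)} (hD : DownwardClosed D) (c : α) :
    DownwardClosed (List.cons c ⁻¹' D) :=
  fun _ _ hab => hD (hab.cons le_rfl)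

theorem DownwardClosed.cons_mem {D : Set (List α)} (hD : DownwardClosed D) {c d : α} (hcd : c ≤ d)
    {a : List α} (ha : d :: a ∈ D) : c :: a ∈ D :=
  hD ((List.forall₂_refl a).cons hcd) ha

/-- The play of the word game with turn order `a` in which `A` always plays the least letter and
`B` the greatest one. -/
def extremalPlay (α : Type*) [LE α] [BoundedOrder α] (a : List Bool) : List α :=
  a.map fun b => if b then ⊤ else ⊥

theorem DownwardClosed.mem_Wset_iff [BoundedOrder α] {D : Set (List α)} (hD : DownwardClosed D)
    {a : List Bool} : a ∈ Wset D ↔ extremalPlay α a ∈ D := by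
  induction a generalizing D with
  | nil => exact nil_mem_Wset
  | cons b a ih =>
    have hquot (c : α) : a ∈ Wset (List.cons c ⁻¹' D) ↔ c :: extremalPlay α a ∈ D :=
      ih (hD.preimage_cons c)
    cases b
    · simp only [false_cons_mem_Wset, hquot]
      exact ⟨fun ⟨_, hc⟩ => hD.cons_mem bot_le hc, fun h => ⟨⊥, h⟩⟩
    · simp only [true_cons_mem_Wset, hquot]
      exact ⟨fun h => h ⊤, fun h _ => hD.cons_mem le_top h⟩

end DownwardClosed

section CountingGame

variable {S : Type*}

theorem cplayAux_cons (sA : List S → Finset S) (sB : List S → Finset S → S) (n : ℕ) (c : S)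
    (w : List S) :
    cplayAux sA sB n (c :: w) = c :: cplayAux (sA ∘ List.cons c) (sB ∘ List.cons c) n w := by
  induction n generalizing w with
  | zero => rfl
  | succ _ ih => exact ih _

theorem cplay_succ (sA : List S → Finset S) (sB : List S → Finset S → S) (n : ℕ) :
    cplay sA sB (n + 1) = sB [] (sA []) ::
      cplay (sA ∘ List.cons (sB [] (sA []))) (sB ∘ List.cons (sB [] (sA []))) n :=
  cplayAux_cons sA sB n (sB [] (sA [])) []

/-- A strategy of `B` in the counting game is legal if it picks a letter of every nonempty set
that is offered. -/
def IsLegal (sB : List S → Finset S → S) : Prop :=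
  ∀ (w : List S) (T : Finset S), T.Nonempty → sB w T ∈ T

theorem exists_isLegal [Nonempty S] : ∃ sB : List S → Finset S → S, IsLegal sB := by
  choose! pick hpick using fun (T : Finset S) (hT : T.Nonempty) => hT.exists_mem
  exact ⟨fun _ => pick, fun _ => hpick⟩

variable [Fintype S]

/-- The alphabet `{1, …, |S|}` of the parameters of the counting game over `S`. -/
abbrev Parameter (S : Type*) [Fintype S] : Type := { i : ℕ // 1 ≤ i ∧ i ≤ Fintype.card S }

instance [Nonempty S] : BoundedOrder (Parameter S) where
  bot := ⟨1, le_rfl, Fintype.card_pos⟩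
  top := ⟨Fintype.card S, Fintype.card_pos, le_rfl⟩
  bot_le k := k.2.1
  le_top k := k.2.2

/-- A strategy `sA` of `A` is winning in the counting game with target `X` and parameter `a` if,
against every legal strategy of `B`, it offers sets of the prescribed sizes and the play is
in `X`. -/
def IsCountingWin (X : Set (List S)) (a : List (Parameter S)) (sA : List S → Finset S) : Prop :=
  ∀ sB : List S → Finset S → S, IsLegal sB →
    cplay sA sB a.length ∈ X ∧
      ∀ i : Fin a.length, (sA ((cplay sA sB a.length).take i.val)).card = (a.get i).val

theorem isCountingWin_cons {X : Set (List S)} {k : Parameter S} {a : List (Parameter S)}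
    {sA : List S → Finset S} :
    IsCountingWin X (k :: a) sA ↔ (sA []).card = k.val ∧
      ∀ c ∈ sA [], IsCountingWin (List.cons c ⁻¹' X) a (sA ∘ List.cons c) := by
  classical
  constructor
  · intro h
    refine ⟨?_, fun c hc sB hsB => ?_⟩
    · have : Nonempty S := Fintype.card_pos_iff.1 (k.2.1.trans k.2.2)
      obtain ⟨sB, hsB⟩ := exists_isLegal (S := S)
      exact (h sB hsB).2 ⟨0, Nat.succ_pos _⟩
    · -- `B` opens with `c` and then follows `sB`; the `else` branch only keeps the strategy legal.
      let sB' : List S → Finset S → S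
        | [], T => if c ∈ T then c else sB [] T
        | _ :: w, T => sB w T
      have hlegal : IsLegal sB' := by
        rintro (_ | ⟨_, w⟩) T hT
        · by_cases hcT : c ∈ T
          · simpa only [sB', if_pos hcT]
          · simpa only [sB', if_neg hcT] using hsB [] T hT
        · exact hsB w T hT
      have hfirst : sB' [] (sA []) = c := if_pos hc
      have hplay : cplay sA sB' (k :: a).length = c :: cplay (sA ∘ List.cons c) sB a.length :=
        (cplay_succ sA sB' a.length).trans (by rw [hfirst]; rfl)
      have hwin := h sB' hlegal
      rw [hplay] at hwin
      exact ⟨hwin.1, fun i => hwin.2 i.succ⟩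
  · rintro ⟨hcard, h⟩ sB hsB
    have hoffer : (sA []).Nonempty := Finset.card_pos.1 (hcard ▸ k.2.1)
    have hwin := h (sB [] (sA [])) (hsB [] _ hoffer) (sB ∘ List.cons (sB [] (sA [])))
      fun _ => hsB _
    rw [show cplay sA sB (k :: a).length = _ from cplay_succ sA sB a.length]
    exact ⟨hwin.1, Fin.cases hcard hwin.2⟩

theorem nil_mem_CWset [Nonempty S] {X : Set (List S)} : [] ∈ CWset X ↔ [] ∈ X := by
  obtain ⟨sB, hsB⟩ := exists_isLegal (S := S)
  exact ⟨fun ⟨_, h⟩ => (h sB hsB).1, fun h => ⟨fun _ => ∅, fun _ _ => ⟨h, fun i => i.elim0⟩⟩⟩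

/-- The first letters after which `A` still wins the counting game with target `X` if `a` is the
rest of the parameter. -/
def winningLetters (X : Set (List S)) (a : List (Parameter S)) : Set S :=
  {c | a ∈ CWset (List.cons c ⁻¹' X)}

theorem cons_mem_CWset {X : Set (List S)} {k : Parameter S} {a : List (Parameter S)} :
    k :: a ∈ CWset X ↔ k.val ≤ (winningLetters X a).ncard := by
  constructor
  · rintro ⟨sA, hsA⟩
    obtain ⟨hcard, hwin⟩ := isCountingWin_cons.1 hsA
    rw [← hcard, ← Set.ncard_coe_finset]
    exact Set.ncard_le_ncard fun c hc => ⟨_, hwin c hc⟩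
  · intro hk
    obtain ⟨T, hT, hcard⟩ := Set.exists_subset_card_eq hk
    lift T to Finset S using T.toFinite
    choose! sA hsA using show ∀ c ∈ T, ∃ sA, IsCountingWin (List.cons c ⁻¹' X) a sA from hT
    exact ⟨fun | [] => T | c :: w => sA c w,
      isCountingWin_cons.2 ⟨(Set.ncard_coe_finset T).symm.trans hcard, hsA⟩⟩

theorem downwardClosed_CWset (X : Set (List S)) : DownwardClosed (CWset X) := by
  intro a b hab
  induction hab generalizing X with
  | nil => exact id
  | cons hkl _ ih =>
    intro hb
    rw [cons_mem_CWset] at hb ⊢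
    exact (Subtype.coe_le_coe.2 hkl).trans <| hb.trans <|
      Set.ncard_le_ncard fun c hc => ih (List.cons c ⁻¹' X) hc

theorem bot_cons_mem_CWset [Nonempty S] {X : Set (List S)} {a : List (Parameter S)} :
    ⊥ :: a ∈ CWset X ↔ ∃ c, a ∈ CWset (List.cons c ⁻¹' X) :=
  cons_mem_CWset.trans (Set.ncard_pos (Set.toFinite _))

theorem ncard_winningLetters_le (X : Set (List S)) (a : List (Parameter S)) :
    (winningLetters X a).ncard ≤ Fintype.card S :=
  (Set.ncard_le_card _).trans_eq Nat.card_eq_fintype_card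

theorem top_cons_mem_CWset [Nonempty S] {X : Set (List S)} {a : List (Parameter S)} :
    ⊤ :: a ∈ CWset X ↔ ∀ c, a ∈ CWset (List.cons c ⁻¹' X) :=
  calc ⊤ :: a ∈ CWset X
    _ ↔ Fintype.card S ≤ (winningLetters X a).ncard := cons_mem_CWset
    _ ↔ (winningLetters X a).ncard = Fintype.card S := (ncard_winningLetters_le X a).ge_iff_eq
    _ ↔ winningLetters X a = Set.univ := by
      rw [Set.eq_univ_iff_ncard, Nat.card_eq_fintype_card]
    _ ↔ ∀ c, a ∈ CWset (List.cons c ⁻¹' X) := Set.eq_univ_iff_forall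

theorem extremalPlay_mem_CWset [Nonempty S] {X : Set (List S)} {a : List Bool} :
    extremalPlay (Parameter S) a ∈ CWset X ↔ a ∈ Wset X := by
  induction a generalizing X with
  | nil => exact nil_mem_CWset.trans nil_mem_Wset.symm
  | cons b a ih =>
    cases b
    · exact bot_cons_mem_CWset.trans ((exists_congr fun _ => ih).trans false_cons_mem_Wset.symm)
    · exact top_cons_mem_CWset.trans ((forall_congr' fun _ => ih).trans true_cons_mem_Wset.symm)

theorem Wset_CWset [Nonempty S] (X : Set (List S)) : Wset (CWset X) = Wset X :=
  Set.ext fun _ => (downwardClosed_CWset X).mem_Wset_iff.trans extremalPlay_mem_CWset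

end CountingGame

section Slice

variable {α : Type*}

/-- The words of length `n` in `X`; `X` itself may contain words of different lengths. -/
def slice (X : Set (List α)) (n : ℕ) : Set (List α) := {w ∈ X | w.length = n}

/-- Sorting the words of a set by length. -/
def equivSigmaSlice (X : Set (List α)) : X ≃ Σ n, slice X n where
  toFun w := ⟨w.val.length, w.val, w.property, rfl⟩
  invFun p := ⟨p.2.val, p.2.property.1⟩
  left_inv _ := rfl
  right_inv := by rintro ⟨_, w, hw, rfl⟩; rfl

/-- Sorting the words of length `n + 1` of a set by first letter. -/
def sliceSuccEquiv (X : Set (List α)) (n : ℕ) :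
    slice X (n + 1) ≃ Σ c, slice (List.cons c ⁻¹' X) n where
  toFun
    | ⟨c :: w, hw⟩ => ⟨c, w, hw.1, Nat.succ.inj hw.2⟩
  invFun p := ⟨p.1 :: p.2.val, p.2.property.1, congrArg Nat.succ p.2.property.2⟩
  left_inv := by rintro ⟨_ | ⟨c, w⟩, hw⟩ <;> [cases hw.2; rfl]
  right_inv _ := rfl

theorem slice_zero (X : Set (List α)) : slice X 0 = {w | w = [] ∧ [] ∈ X} := by
  ext w
  simp +contextual [slice, and_comm]

end Slice

section Cardinality

/-- Exchanging the order of summation in a double count of a relation. -/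
def sigmaSubtypeComm {α β : Type*} (r : α → β → Prop) :
    (Σ a, {b // r a b}) ≃ Σ b, {a // r a b} where
  toFun p := ⟨p.2.val, p.1, p.2.property⟩
  invFun p := ⟨p.2.val, p.1, p.2.property⟩
  left_inv _ := rfl
  right_inv _ := rfl

theorem ncard_setOf_val_le {m N : ℕ} (hm : m ≤ N) :
    {k : { i : ℕ // 1 ≤ i ∧ i ≤ N } | k.val ≤ m}.ncard = m := by
  have himage : Subtype.val '' {k : { i : ℕ // 1 ≤ i ∧ i ≤ N } | k.val ≤ m} = Finset.Icc 1 m := by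
    ext i
    simp only [Set.mem_image, Set.mem_ofPred_eq, Subtype.exists, exists_and_left, exists_prop,
      exists_eq_right_right, Finset.coe_Icc, Set.mem_Icc]
    exact ⟨fun ⟨him, hi, _⟩ => ⟨hi, him⟩, fun ⟨hi, him⟩ => ⟨him, hi, him.trans hm⟩⟩
  rw [← Set.ncard_image_of_injective _ Subtype.val_injective, himage, Set.ncard_coe_finset,
    Nat.card_Icc, Nat.add_sub_cancel]

variable {S : Type*} [Fintype S]

theorem nonempty_equiv_winningLetters (X : Set (List S)) (a : List (Parameter S)) :
    Nonempty ({k | k :: a ∈ CWset X} ≃ winningLetters X a) := by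
  have : Finite (Parameter S) := (Set.finite_Icc 1 (Fintype.card S)).to_subtype
  refine Finite.card_eq.1 ?_
  simp only [cons_mem_CWset]
  exact ncard_setOf_val_le (ncard_winningLetters_le X a)

theorem nonempty_slice_CWset_equiv [Nonempty S] (n : ℕ) (X : Set (List S)) :
    Nonempty (slice (CWset X) n ≃ slice X n) := by
  induction n generalizing X with
  | zero =>
    by_cases hX : [] ∈ X
    · simpa [slice_zero, nil_mem_CWset, hX] using ⟨Equiv.ofUnique _ _⟩
    · simpa [slice_zero, nil_mem_CWset, hX] using ⟨Equiv.equivOfIsEmpty _ _⟩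
  | succ n ih =>
    have hletters (a : List (Parameter S)) :
        Nonempty ({k // k :: a ∈ CWset X ∧ a.length = n} ≃
          {c // c ∈ winningLetters X a ∧ a.length = n}) := by
      by_cases ha : a.length = n
      · simp only [ha, and_true]
        exact nonempty_equiv_winningLetters X a
      · simpa only [ha, and_false] using ⟨Equiv.equivOfIsEmpty _ _⟩
    exact ⟨calc
      ↥(slice (CWset X) (n + 1))
      _ ≃ Σ k, slice (List.cons k ⁻¹' CWset X) n := sliceSuccEquiv _ n
      _ ≃ Σ a, {k // k :: a ∈ CWset X ∧ a.length = n} := sigmaSubtypeComm _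
      _ ≃ Σ a, {c // c ∈ winningLetters X a ∧ a.length = n} :=
        Equiv.sigmaCongrRight fun a => (hletters a).some
      _ ≃ Σ c, slice (CWset (List.cons c ⁻¹' X)) n := (sigmaSubtypeComm _).symm
      _ ≃ Σ c, slice (List.cons c ⁻¹' X) n := Equiv.sigmaCongrRight fun c => (ih _).some
      _ ≃ slice X (n + 1) := (sliceSuccEquiv X n).symm⟩

theorem encard_CWset [Nonempty S] (X : Set (List S)) : (CWset X).encard = X.encard :=
  Set.encard_congr <| calc
    ↥(CWset X)
    _ ≃ Σ n, slice (CWset X) n := equivSigmaSlice _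
    _ ≃ Σ n, slice X n := Equiv.sigmaCongrRight fun n => (nonempty_slice_CWset_equiv n X).some
    _ ≃ X := (equivSigmaSlice X).symm

end Cardinality

theorem card_countingWinningSet_and_winningSet_general {S : Type*} [Fintype S] [Nonempty S]
    (L : Set (List S)) : (CWset L).encard = L.encard ∧ Wset (CWset L) = Wset L :=
  ⟨encard_CWset L, Wset_CWset L⟩

/-- For `L ⊆ S^n`, the counting winning set satisfies
`|W̃(L)| = |L|`, and the winning set of the word game over the alphabet `{1,…,|S|}`
with target set `W̃(L)` equals `W(L)`. -/
theorem card_countingWinningSet_and_winningSet {S : Type*} [Fintype S] [Nonempty S]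
    (n : ℕ) (L : Set (List S)) (hL : ∀ w ∈ L, w.length = n) :
    (CWset L).ncard = L.ncard ∧ Wset (CWset L) = Wset L :=
  have h := card_countingWinningSet_and_winningSet_general L
  ⟨congrArg ENat.toNat h.1, h.2⟩
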